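/- For a Tychonoff space X, the following are equivalent: (1) the bitopological function space (C(X), τ_k, τ_p) satisfies S₁(Ω^k_0, Γ^p_0), i.e., for every sequence (A_n) of subsets of C(X) each having the constant zero function 0 in its closure in C_k(X) but with 0 ∉ A_n, one can choose f_n ∈ A_n such that the set {f_n : n ∈ ℕ} is infinite, does not contain 0, and every neighborhood of 0 in C_p(X) contains all but finitely many of its elements; (2) X satisfies S₁(𝒦, Γ), i.e., for every sequence (𝒰_n) of open k-covers of X one can choose U_n ∈ 𝒰_n such that {U_n : n ∈ ℕ} is a γ-cover of X. -/

import Mathlib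

open Set Filter Topology TopologicalSpace

universe u

/-- The topology of pointwise convergence on `C(X, ℝ)`. -/
def pointwiseTopology (X : Type u) [TopologicalSpace X] : TopologicalSpace C(X, ℝ) :=
  TopologicalSpace.induced (fun f : C(X, ℝ) => (f : X → ℝ)) Pi.topologicalSpace

/-- `𝒰` is an (open) k-cover of `X`: a nontrivial open cover such that every compact
subset of `X` is contained in some member of `𝒰`. -/
def IsKCover {X : Type u} [TopologicalSpace X] (𝒰 : Set (Set X)) : Prop :=
  (∀ U ∈ 𝒰, IsOpen U) ∧ ⋃₀ 𝒰 = Set.univ ∧ Set.univ ∉ 𝒰 ∧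
    ∀ K : Set X, IsCompact K → ∃ U ∈ 𝒰, K ⊆ U

/-- `𝒰` is an (open) ω-cover of `X`: a nontrivial open cover such that every finite
subset of `X` is contained in some member of `𝒰`. -/
def IsOmegaCover {X : Type u} [TopologicalSpace X] (𝒰 : Set (Set X)) : Prop :=
  (∀ U ∈ 𝒰, IsOpen U) ∧ ⋃₀ 𝒰 = Set.univ ∧ Set.univ ∉ 𝒰 ∧
    ∀ F : Set X, F.Finite → ∃ U ∈ 𝒰, F ⊆ U

/-- `𝒰` is an (open) γ-cover of `X`: an infinite open cover such that for every finite
subset `F` of `X`, all but finitely many members of `𝒰` contain `F`. -/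
def IsGammaCover {X : Type u} [TopologicalSpace X] (𝒰 : Set (Set X)) : Prop :=
  (∀ U ∈ 𝒰, IsOpen U) ∧ ⋃₀ 𝒰 = Set.univ ∧ 𝒰.Infinite ∧
    ∀ F : Set X, F.Finite → {U ∈ 𝒰 | ¬ F ⊆ U}.Finite

/-- `iw(X) = ℵ₀`: there is a second-countable Tychonoff space `Y` and a continuous
bijection (one-to-one and onto map) from `X` to `Y`. -/
def CountableIWeight (X : Type u) [TopologicalSpace X] : Prop :=
  ∃ (Y : Type u) (_ : TopologicalSpace Y), SecondCountableTopology Y ∧ T35Space Y ∧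
    ∃ f : X → Y, Continuous f ∧ Function.Bijective f

/-- The selection principle `S₁(𝒜, ℬ)`. -/
def S1sel {α : Type u} (𝒜 ℬ : Set (Set α)) : Prop :=
  ∀ A : ℕ → Set α, (∀ n, A n ∈ 𝒜) →
    ∃ b : ℕ → α, (∀ n, b n ∈ A n) ∧ Set.range b ∈ ℬ

/-- The selection principle `S_fin(𝒜, ℬ)`. -/
def SfinSel {α : Type u} (𝒜 ℬ : Set (Set α)) : Prop :=
  ∀ A : ℕ → Set α, (∀ n, A n ∈ 𝒜) →
    ∃ B : ℕ → Set α, (∀ n, (B n).Finite ∧ B n ⊆ A n) ∧ (⋃ n, B n) ∈ ℬ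

/-- A strategy for player ONE in the game `G₁(𝒜, ℬ)` (a function from finite sequences
of TWO's moves to sets) is winning if it always plays members of `𝒜` and ONE wins every
play in which he follows it. -/
def IsWinningStrategyOneG1 {α : Type u} (𝒜 ℬ : Set (Set α)) (σ : List α → Set α) : Prop :=
  (∀ h : List α, σ h ∈ 𝒜) ∧
    ∀ b : ℕ → α, (∀ n, b n ∈ σ (List.ofFn fun i : Fin n => b i)) → Set.range b ∉ ℬ

/-- A strategy for player ONE in the game `G_fin(𝒜, ℬ)` (a function from finite sequences
of TWO's moves, which are finite subsets, to sets) is winning if it always plays members of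
`𝒜` and ONE wins every play in which he follows it. -/
def IsWinningStrategyOneGfin {α : Type u} (𝒜 ℬ : Set (Set α)) (σ : List (Set α) → Set α) :
    Prop :=
  (∀ h : List (Set α), σ h ∈ 𝒜) ∧
    ∀ B : ℕ → Set α,
      (∀ n, (B n).Finite ∧ B n ⊆ σ (List.ofFn fun i : Fin n => B i)) → (⋃ n, B n) ∉ ℬ

/-- `A ⊆ C(X, ℝ)` is sequentially dense in `C_p(X)`: every continuous function is the
pointwise limit of a sequence from `A`. -/
def SeqDenseP (X : Type u) [TopologicalSpace X] (A : Set C(X, ℝ)) : Prop :=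
  ∀ g : C(X, ℝ), ∃ s : ℕ → C(X, ℝ), (∀ n, s n ∈ A) ∧
    Filter.Tendsto s Filter.atTop (@nhds _ (pointwiseTopology X) g)

/-- The family `Ω^k_0` of subsets of `C(X, ℝ)` not containing `0` but having `0` in their
closure with respect to the compact-open topology. -/
def OmegaKZero (X : Type u) [TopologicalSpace X] (A : Set C(X, ℝ)) : Prop :=
  (0 : C(X, ℝ)) ∉ A ∧ (0 : C(X, ℝ)) ∈ closure A

/-- The family `Ω^p_0` of subsets of `C(X, ℝ)` not containing `0` but having `0` in their
closure with respect to the topology of pointwise convergence. -/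
def OmegaPZero (X : Type u) [TopologicalSpace X] (A : Set C(X, ℝ)) : Prop :=
  (0 : C(X, ℝ)) ∉ A ∧ (0 : C(X, ℝ)) ∈ @closure _ (pointwiseTopology X) A

/-- The family `Γ^p_0` of infinite subsets `A` of `C(X, ℝ)` with `0 ∉ A` such that every
neighborhood of `0` in the topology of pointwise convergence contains all but finitely
many elements of `A`. -/
def GammaPZero (X : Type u) [TopologicalSpace X] (A : Set C(X, ℝ)) : Prop :=
  A.Infinite ∧ (0 : C(X, ℝ)) ∉ A ∧
    ∀ N ∈ @nhds _ (pointwiseTopology X) (0 : C(X, ℝ)), {f ∈ A | f ∉ N}.Finite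

/-- In a completely regular space, a compact set and the complement of an open neighbourhood of it
are separated by a continuous function with values in `[0, 1]`. -/
lemma exists_continuousMap_zero_one_of_isCompact {X : Type*} [TopologicalSpace X]
    [CompletelyRegularSpace X] {K U : Set X} (hK : IsCompact K) (hU : IsOpen U) (hKU : K ⊆ U) :
    ∃ f : C(X, ℝ), EqOn f 0 K ∧ EqOn f 1 Uᶜ ∧ ∀ x, f x ∈ Icc (0 : ℝ) 1 := by
  obtain ⟨V, hV, rfl⟩ := (isInducing_stoneCechUnit (X := X)).isOpen_iff.1 hU
  obtain ⟨f, hf0, hf1, hf⟩ := exists_continuous_zero_one_of_isClosed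
    (hK.image continuous_stoneCechUnit).isClosed hV.isClosed_compl
    (disjoint_compl_right_iff_subset.2 (image_subset_iff.2 hKU))
  exact ⟨f.comp ⟨stoneCechUnit, continuous_stoneCechUnit⟩,
    fun x hx => hf0 (mem_image_of_mem _ hx), fun x hx => hf1 hx, fun x => hf _⟩

/-- The zero function lies in the compact-open closure of `A` iff members of `A` are uniformly
small on compact sets. -/
lemma zero_mem_closure_compactOpen_iff {X : Type*} [TopologicalSpace X] {A : Set C(X, ℝ)} :
    (0 : C(X, ℝ)) ∈ closure A ↔
      ∀ K : Set X, IsCompact K → ∀ ε > 0, ∃ f ∈ A, ∀ x ∈ K, |f x| < ε := by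
  have h := (Metric.nhds_basis_ball (x := (0 : ℝ))).nhds_continuousMapConst (X := X)
  have h0 : ContinuousMap.const X (0 : ℝ) = 0 := rfl
  rw [h0] at h
  rw [mem_closure_iff_nhds_basis h]
  simp only [MapsTo, Prod.forall, mem_ofPred_eq, Metric.mem_ball, dist_zero_right,
    Real.norm_eq_abs, and_imp]
  exact forall_congr' fun K => forall_comm

/-- A sequence attaining each value only finitely often has infinite range. -/
lemma infinite_range_of_forall_eventually_ne {α : Type*} {b : ℕ → α}
    (h : ∀ n, ∀ᶠ m in atTop, b m ≠ b n) : (range b).Infinite := by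
  intro hfin
  obtain ⟨_, ⟨n, rfl⟩, hn⟩ :
      ∃ a ∈ range b, ∃ᶠ m in atTop, b m = a := by
    by_contra! hc
    have := (hfin.eventually_all (l := atTop) (p := fun a m => b m ≠ a)).2
      (fun a ha => by simpa using hc a ha)
    obtain ⟨m, hm⟩ := this.exists
    exact hm (b m) (mem_range_self m) rfl
  exact hn (h n)

/-- An eventually containing sequence of proper open sets forms a γ-cover. -/
lemma isGammaCover_range {X : Type u} [TopologicalSpace X] {U : ℕ → Set X}
    (hopen : ∀ n, IsOpen (U n)) (hne : ∀ n, U n ≠ univ) (h : ∀ x, ∀ᶠ n in atTop, x ∈ U n) :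
    IsGammaCover (range U) := by
  refine ⟨forall_mem_range.2 hopen, ?_, ?_, fun F hF => ?_⟩
  · refine eq_univ_of_forall fun x => ?_
    obtain ⟨n, hn⟩ := (h x).exists
    exact ⟨U n, mem_range_self n, hn⟩
  · refine infinite_range_of_forall_eventually_ne fun n => ?_
    obtain ⟨x, hx⟩ := (ne_univ_iff_exists_notMem _).1 (hne n)
    filter_upwards [h x] with m hm heq
    exact hx (heq ▸ hm)
  · have hev : ∀ᶠ n in atTop, F ⊆ U n := (hF.eventually_all).2 fun x _ => h x
    rw [← Nat.cofinite_eq_atTop, eventually_cofinite] at hev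
    refine (hev.image U).subset ?_
    rintro _ ⟨⟨n, rfl⟩, hn⟩
    exact ⟨n, hn, rfl⟩

/-- Under `S₁(𝒦, Γ)`, any sequence of k-covers admits a selection such that every point lies in
all but finitely many of the selected sets, indexed by the sequence. -/
lemma S1sel.exists_eventually_mem_of_isKCover {X : Type u} [TopologicalSpace X]
    (h : S1sel {𝒰 : Set (Set X) | IsKCover 𝒰} {𝒰 : Set (Set X) | IsGammaCover 𝒰})
    {𝒰 : ℕ → Set (Set X)} (h𝒰 : ∀ n, IsKCover (𝒰 n)) :
    ∃ U : ℕ → Set X, (∀ n, U n ∈ 𝒰 n) ∧ ∀ x, ∀ᶠ n in atTop, x ∈ U n := by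
  obtain ⟨b, hb, -, -, hinf, hfin⟩ := h
    (fun n => {W | ∃ V : ℕ → Set X, (∀ i, V i ∈ 𝒰 i) ∧ W = ⋂ i ∈ Iic n, V i}) (fun n => by
      have hK : ∀ K : Set X, IsCompact K →
          ∃ W, (∃ V : ℕ → Set X, (∀ i, V i ∈ 𝒰 i) ∧ W = ⋂ i ∈ Iic n, V i) ∧ K ⊆ W := by
        intro K hK
        choose V hV hKV using fun i => (h𝒰 i).2.2.2 K hK
        exact ⟨_, ⟨V, hV, rfl⟩, subset_iInter₂ fun i _ => hKV i⟩
      refine ⟨?_, ?_, ?_, hK⟩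
      · rintro _ ⟨V, hV, rfl⟩
        exact (finite_Iic n).isOpen_biInter fun i _ => (h𝒰 i).1 _ (hV i)
      · refine eq_univ_of_forall fun x => ?_
        obtain ⟨W, hW, hxW⟩ := hK {x} isCompact_singleton
        exact ⟨W, hW, hxW rfl⟩
      · rintro ⟨V, hV, hW⟩
        have : V n = univ :=
          univ_subset_iff.1 (hW.le.trans (iInter₂_subset n self_mem_Iic))
        exact (h𝒰 n).2.2.1 (this ▸ hV n))
  choose V hV hbV using hb
  obtain ⟨φ, hφ⟩ : ∃ φ : ℕ → ℕ, Function.Injective (b ∘ φ) := by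
    choose φ hφ using fun k => (hinf.natEmbedding _ k).2
    refine ⟨φ, fun i j hij => (hinf.natEmbedding _).injective (Subtype.ext ?_)⟩
    rw [← hφ i, ← hφ j]
    exact hij
  have hφtop : Tendsto φ atTop atTop := hφ.of_comp.nat_tendsto_atTop
  choose k hk hφk using fun m => (((eventually_ge_atTop m).and
    (hφtop.eventually_ge_atTop m)).exists)
  refine ⟨fun m => V (φ (k m)) m, fun m => hV _ m, fun x => ?_⟩
  have hx : ∀ᶠ j in atTop, x ∈ b (φ j) := by
    rw [← Nat.cofinite_eq_atTop, eventually_cofinite]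
    refine ((hfin {x} (finite_singleton x)).preimage hφ.injOn).subset fun j hj => ?_
    exact ⟨mem_range_self _, by simpa using hj⟩
  filter_upwards [(tendsto_atTop_mono hk tendsto_id).eventually hx] with m hm
  rw [hbV] at hm
  exact mem_iInter₂.1 hm m (hφk m)

/-- The selection of `S1sel.exists_eventually_mem_of_isKCover` is also possible from families that
may contain the whole space. -/
lemma S1sel.exists_eventually_mem {X : Type u} [TopologicalSpace X]
    (h : S1sel {𝒰 : Set (Set X) | IsKCover 𝒰} {𝒰 : Set (Set X) | IsGammaCover 𝒰})
    {𝒰 : ℕ → Set (Set X)} (hopen : ∀ n, ∀ U ∈ 𝒰 n, IsOpen U)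
    (hK : ∀ n, ∀ K : Set X, IsCompact K → ∃ U ∈ 𝒰 n, K ⊆ U) :
    ∃ U : ℕ → Set X, (∀ n, U n ∈ 𝒰 n) ∧ ∀ x, ∀ᶠ n in atTop, x ∈ U n := by
  classical
  have hcover : ∀ n, univ ∉ 𝒰 n → IsKCover (𝒰 n) := fun n hn =>
    ⟨hopen n, eq_univ_of_forall fun x =>
      let ⟨U, hU, hxU⟩ := hK n {x} isCompact_singleton
      ⟨U, hU, hxU rfl⟩, hn, hK n⟩
  by_cases hall : ∀ n, univ ∈ 𝒰 n
  · exact ⟨fun _ => univ, hall, fun x => by simp⟩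
  push Not at hall
  obtain ⟨m, hm⟩ := hall
  obtain ⟨U, hU, hxU⟩ := h.exists_eventually_mem_of_isKCover
    (𝒰 := fun n => if univ ∈ 𝒰 n then 𝒰 m else 𝒰 n) (fun n => by
      split_ifs with hn
      exacts [hcover m hm, hcover n hn])
  refine ⟨fun n => if univ ∈ 𝒰 n then univ else U n, fun n => ?_, fun x => ?_⟩
  · have := hU n
    dsimp only
    split_ifs at this ⊢ with hn
    exacts [hn, this]
  · filter_upwards [hxU x] with n hn
    split_ifs
    exacts [mem_univ x, hn]

/-- A sequence of nonzero functions converging pointwise to `0` has range in `Γ^p_0`. -/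
lemma gammaPZero_range {X : Type u} [TopologicalSpace X] {f : ℕ → C(X, ℝ)} (hne : ∀ n, f n ≠ 0)
    (hf : ∀ x, Tendsto (fun n => f n x) atTop (𝓝 0)) : GammaPZero X (range f) := by
  refine ⟨?_, fun ⟨n, hn⟩ => hne n hn, fun N hN => ?_⟩
  · refine infinite_range_of_forall_eventually_ne fun n => ?_
    obtain ⟨x, hx⟩ := DFunLike.ne_iff.1 (hne n)
    filter_upwards [(hf x).eventually_ne (Ne.symm hx)] with m hm heq
    exact hm (by rw [heq])
  · have hlim : Tendsto f atTop (@nhds _ (pointwiseTopology X) 0) := by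
      rw [pointwiseTopology, nhds_induced, tendsto_comap_iff]
      exact tendsto_pi_nhds.2 hf
    have hev := hlim hN
    rw [← Nat.cofinite_eq_atTop] at hev
    refine (Set.Finite.image f hev).subset ?_
    rintro _ ⟨⟨n, rfl⟩, hn⟩
    exact ⟨n, hn, rfl⟩

/-- An injective sequence with range in `Γ^p_0` converges pointwise to `0`. -/
lemma GammaPZero.tendsto_apply {X : Type u} [TopologicalSpace X] {f : ℕ → C(X, ℝ)}
    (h : GammaPZero X (range f)) (hf : Function.Injective f) (x : X) :
    Tendsto (fun n => f n x) atTop (𝓝 0) := by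
  have hlim : Tendsto f atTop (@nhds _ (pointwiseTopology X) 0) := by
    intro N hN
    rw [← Nat.cofinite_eq_atTop]
    exact ((h.2.2 N hN).preimage hf.injOn).subset fun n hn => ⟨mem_range_self n, hn⟩
  rw [pointwiseTopology, nhds_induced, tendsto_comap_iff] at hlim
  exact tendsto_pi_nhds.1 hlim x

/-- Functions bounded by `c` and equal to `c` off some member of a k-cover accumulate at `0` in
the compact-open topology. -/
lemma IsKCover.omegaKZero {X : Type u} [TopologicalSpace X] [CompletelyRegularSpace X]
    {𝒰 : Set (Set X)} (h : IsKCover 𝒰) {c : ℝ} (hc : 0 < c) :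
    OmegaKZero X {f | ∃ U ∈ 𝒰, (∀ x ∉ U, f x = c) ∧ ∀ x, f x ≤ c} := by
  refine ⟨?_, zero_mem_closure_compactOpen_iff.2 fun K hK ε hε => ?_⟩
  · rintro ⟨U, hU, hUc, -⟩
    refine h.2.2.1 ((eq_univ_of_forall fun x => ?_ : U = univ) ▸ hU)
    by_contra hx
    exact hc.ne (hUc x hx)
  · obtain ⟨U, hU, hKU⟩ := h.2.2.2 K hK
    obtain ⟨f, hf0, hf1, hf⟩ := exists_continuousMap_zero_one_of_isCompact hK (h.1 U hU) hKU
    refine ⟨c • f, ⟨U, hU, fun x hx => ?_, fun x => ?_⟩, fun x hx => ?_⟩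
    · simp [hf1 hx]
    · simpa using mul_le_of_le_one_right hc.le (hf x).2
    · simpa [hf0 hx] using hε

theorem statement13 (X : Type u) [TopologicalSpace X] [T35Space X] :
    S1sel {A : Set C(X, ℝ) | OmegaKZero X A} {A : Set C(X, ℝ) | GammaPZero X A} ↔
    S1sel {𝒰 : Set (Set X) | IsKCover 𝒰} {𝒰 : Set (Set X) | IsGammaCover 𝒰} := by
  constructor
  · intro h 𝒰 h𝒰
    have hpos : ∀ n : ℕ, (0 : ℝ) < n + 1 := fun n => by positivity
    -- Distinct heights `n + 1` force the selected functions to be distinct.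
    obtain ⟨f, hf, hfΓ⟩ := h
      (fun n => {f | ∃ U ∈ 𝒰 n, (∀ x ∉ U, f x = (n : ℝ) + 1) ∧ ∀ x, f x ≤ (n : ℝ) + 1})
      (fun n => (h𝒰 n).omegaKZero (hpos n))
    choose U hU hfU hfle using hf
    have hne : ∀ n, U n ≠ univ := fun n hn => (h𝒰 n).2.2.1 (hn ▸ hU n)
    have hle : ∀ m n, f m = f n → m ≤ n := fun m n hmn => by
      obtain ⟨x, hx⟩ := (ne_univ_iff_exists_notMem _).1 (hne m)
      have hxn := hfle n x
      rw [← hmn, hfU m x hx] at hxn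
      exact_mod_cast (add_le_add_iff_right 1).1 hxn
    have hinj : Function.Injective f := fun m n hmn =>
      (hle m n hmn).antisymm (hle n m hmn.symm)
    refine ⟨U, hU, isGammaCover_range (fun n => (h𝒰 n).1 _ (hU n)) hne fun x => ?_⟩
    filter_upwards [(hfΓ.tendsto_apply hinj x).eventually_lt_const one_pos] with n hn
    by_contra hx
    rw [hfU n x hx] at hn
    linarith [n.cast_nonneg (α := ℝ)]
  · intro h A hA
    obtain ⟨U, hU, hxU⟩ := h.exists_eventually_mem
      (𝒰 := fun n => (fun f : C(X, ℝ) => {x | |f x| < 1 / ((n : ℝ) + 1)}) '' A n)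
      (by
        rintro n _ ⟨f, -, rfl⟩
        exact isOpen_lt (by fun_prop) continuous_const)
      (fun n K hK => by
        obtain ⟨f, hf, hfK⟩ := zero_mem_closure_compactOpen_iff.1 (hA n).2 K hK _
          (Nat.one_div_pos_of_nat (n := n))
        exact ⟨_, mem_image_of_mem _ hf, hfK⟩)
    choose f hf hfU using hU
    refine ⟨f, hf, gammaPZero_range (fun n hn => (hA n).1 (hn ▸ hf n)) fun x => ?_⟩
    refine squeeze_zero_norm' ?_ (tendsto_one_div_add_atTop_nhds_zero_nat (𝕜 := ℝ))
    filter_upwards [hxU x] with n hn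
    rw [← hfU n] at hn
    exact le_of_lt hn
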